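/- The group ring Z_n Q_8 of the quaternion group Q_8 over the integers modulo n (n ≥ 2) is reversible if and only if n = 2. -/

import Mathlib

/-!
If `n = dm`, then `m x` vanishes in `Z_n[G]` exactly when `x` vanishes in `Z_d[G]`, so reversibility
descends from `Z_n[G]` to `Z_d[G]` and it is enough to treat `n = 4`, `n` an odd prime, and `n = 2`.
Modulo an odd prime choose `u² + v² = -1`; then the quaternion `1 + ui + vj` has norm zero. Modulo
`4` the element `1 + i + j - ji` plays the same role. Both give one-sided zero divisors.

In characteristic `2` let `z` be the central involution and `w = 1 + z`, so `w² = 0`. The antipode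
`S` is `x ↦ zx + τ(x)w` with `τ` linear. Applying `S` to `xy = 0` gives
`yx = τ(x)wy + τ(y)wx`, while `S(x)x = ε(x)² + w n(x)` forces `wx = 0`, or `wy = 0`, or both
`wx` and `wy` to be multiples of the sum of all group elements, provided `s² + st + t²` is
anisotropic. In each case the two terms cancel.
-/

section Reversible

open MonoidAlgebra

/-- A reversible ring: `a * b = 0` implies `b * a = 0`. -/
def IsReversibleRing (A : Type*) [Mul A] [Zero A] : Prop :=
  ∀ a b : A, a * b = 0 → b * a = 0

theorem IsReversibleRing.of_surjective {A B : Type*} [Semiring A] [Semiring B]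
    (hA : IsReversibleRing A) {f : A →+* B} (hf : Function.Surjective f) {c : A}
    (hc : ∀ x, Commute c x) (hker : ∀ x, c * x = 0 ↔ f x = 0) : IsReversibleRing B := by
  intro b₁ b₂ h
  obtain ⟨a₁, rfl⟩ := hf b₁
  obtain ⟨a₂, rfl⟩ := hf b₂
  rw [← map_mul, ← hker, ← mul_assoc] at h
  rw [← map_mul, ← hker, (hc a₂).left_comm]
  exact hA _ _ h

theorem zmod_natCast_mul_eq_zero_iff {d m : ℕ} [NeZero m] (k : ZMod (d * m)) :
    (m : ZMod (d * m)) * k = 0 ↔ ZMod.castHom (Dvd.intro m rfl) (ZMod d) k = 0 := by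
  obtain ⟨k, rfl⟩ := ZMod.intCast_surjective k
  rw [map_intCast, ← Int.cast_natCast, ← Int.cast_mul, ZMod.intCast_zmod_eq_zero_iff_dvd,
    ZMod.intCast_zmod_eq_zero_iff_dvd, Nat.cast_mul, mul_comm (d : ℤ),
    mul_dvd_mul_iff_left (Nat.cast_ne_zero.2 (NeZero.ne m))]

theorem IsReversibleRing.monoidAlgebra_zmod_of_dvd {G : Type*} [Monoid G] {d n : ℕ} [NeZero n]
    (hdn : d ∣ n) (h : IsReversibleRing (ZMod n)[G]) : IsReversibleRing (ZMod d)[G] := by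
  obtain ⟨m, rfl⟩ := hdn
  have : NeZero m := ⟨right_ne_zero_of_mul (NeZero.ne (d * m))⟩
  let f := ZMod.castHom (Dvd.intro m rfl) (ZMod d)
  refine h.of_surjective (f := mapRingHom G f) (c := single 1 (m : ZMod (d * m)))
    (map_surjective (f : ZMod (d * m) →+ ZMod d) (ZMod.castHom_surjective (Dvd.intro m rfl)))
    (single_commute (Commute.one_left ·) (Commute.all _)) fun x => ?_
  simp only [← coeff_inj, Finsupp.ext_iff, coeff_single_one_mul, coeff_mapRingHom, coeff_zero,
    Finsupp.zero_apply, f, zmod_natCast_mul_eq_zero_iff]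

end Reversible

namespace QuaternionGroupRing

open MonoidAlgebra QuaternionGroup HopfAlgebra Coalgebra

local notation "Q₈" => QuaternionGroup 2

section Coordinates

theorem forall_quaternionGroup_two {P : Q₈ → Prop} :
    (∀ g, P g) ↔
      (P (a 0) ∧ P (a 1) ∧ P (a 2) ∧ P (a 3)) ∧ P (xa 0) ∧ P (xa 1) ∧ P (xa 2) ∧ P (xa 3) := by
  refine ⟨fun h => by simp only [h, and_self], fun h g => ?_⟩
  rcases g with i | i <;> fin_cases i <;> tauto

theorem sum_quaternionGroup_two {M : Type*} [AddCommMonoid M] (f : Q₈ → M) :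
    ∑ g, f g =
      f (a 0) + f (a 1) + f (a 2) + f (a 3) + (f (xa 0) + f (xa 1) + f (xa 2) + f (xa 3)) := by
  have huniv : (Finset.univ : Finset Q₈) = {a 0, a 1, a 2, a 3, xa 0, xa 1, xa 2, xa 3} := by
    decide
  rw [huniv]
  repeat rw [Finset.sum_insert (by decide)]
  simp only [Finset.sum_singleton, add_assoc]

variable {R : Type*} [Semiring R]

theorem coeff_mul_a (x y : R[Q₈]) (k : ZMod (2 * 2)) :
    (x * y).coeff (a k) =
      x.coeff (a 0) * y.coeff (a k) + x.coeff (a 1) * y.coeff (a (k + 3)) +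
        x.coeff (a 2) * y.coeff (a (k + 2)) + x.coeff (a 3) * y.coeff (a (k + 1)) +
      (x.coeff (xa 0) * y.coeff (xa (k + 2)) + x.coeff (xa 1) * y.coeff (xa (k + 3)) +
        x.coeff (xa 2) * y.coeff (xa k) + x.coeff (xa 3) * y.coeff (xa (k + 1))) := by
  rw [coeff_mul_apply_left, Finsupp.sum_fintype _ _ fun _ => zero_mul _, sum_quaternionGroup_two]
  fin_cases k <;> rfl

theorem coeff_mul_xa (x y : R[Q₈]) (k : ZMod (2 * 2)) :
    (x * y).coeff (xa k) =
      x.coeff (a 0) * y.coeff (xa k) + x.coeff (a 1) * y.coeff (xa (k + 1)) +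
        x.coeff (a 2) * y.coeff (xa (k + 2)) + x.coeff (a 3) * y.coeff (xa (k + 3)) +
      (x.coeff (xa 0) * y.coeff (a k) + x.coeff (xa 1) * y.coeff (a (k + 3)) +
        x.coeff (xa 2) * y.coeff (a (k + 2)) + x.coeff (xa 3) * y.coeff (a (k + 1))) := by
  rw [coeff_mul_apply_left, Finsupp.sum_fintype _ _ fun _ => zero_mul _, sum_quaternionGroup_two]
  fin_cases k <;> rfl

end Coordinates

section ZeroDivisors

variable {R : Type*} [CommRing R]

-- With `i = a 1` and `j = xa 0`, the factors are `(1 - i²)(1 + ui + vj)` and `(1 - ui - vj)i`.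
theorem not_isReversibleRing_of_sq_add_sq_eq_neg_one {u v : R} (huv : u ^ 2 + v ^ 2 = -1)
    (hv : 2 * v ≠ 0) : ¬ IsReversibleRing R[Q₈] := by
  intro h
  let x : R[Q₈] := single (a 0) 1 + single (a 1) u + single (xa 0) v -
    (single (a 2) 1 + single (a 3) u + single (xa 2) v)
  let y : R[Q₈] := single (a 1) 1 - single (a 2) u - single (xa 1) v
  have hxy : x * y = 0 := by
    rw [← coeff_inj, Finsupp.ext_iff, forall_quaternionGroup_two]
    simp only [coeff_mul_a, coeff_mul_xa]
    simp only [x, y, coeff_add, coeff_sub, coeff_zero, coeff_single, Finsupp.add_apply,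
      Finsupp.sub_apply, Finsupp.zero_apply, Finsupp.single_apply]
    simp +decide only [if_true, if_false]
    grind
  have hyx : (y * x).coeff (xa 1) = -(2 * v) := by
    rw [coeff_mul_xa]
    simp only [x, y, coeff_add, coeff_sub, coeff_single, Finsupp.add_apply, Finsupp.sub_apply,
      Finsupp.single_apply]
    simp +decide only [if_true, if_false]
    ring
  rw [h x y hxy] at hyx
  exact hv (neg_eq_zero.1 hyx.symm)

-- With `p = 1 + i` and `q = 1 - i`, the factors are `p + jq` and `p - jq̄`; their product is `4i`.
theorem not_isReversibleRing_of_four_eq_zero (h4 : (4 : R) = 0) (h2 : (2 : R) ≠ 0) :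
    ¬ IsReversibleRing R[Q₈] := by
  intro h
  let x : R[Q₈] := single (a 0) 1 + single (a 1) 1 + single (xa 0) 1 - single (xa 1) 1
  let y : R[Q₈] := single (a 0) 1 + single (a 1) 1 - single (xa 0) 1 + single (xa 3) 1
  have hxy : x * y = 0 := by
    rw [← coeff_inj, Finsupp.ext_iff, forall_quaternionGroup_two]
    simp only [coeff_mul_a, coeff_mul_xa]
    simp only [x, y, coeff_add, coeff_sub, coeff_zero, coeff_single, Finsupp.add_apply,
      Finsupp.sub_apply, Finsupp.zero_apply, Finsupp.single_apply]
    simp +decide only [if_true, if_false]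
    grind
  have hyx : (y * x).coeff (a 1) = 2 := by
    rw [coeff_mul_a]
    simp only [x, y, coeff_add, coeff_sub, coeff_single, Finsupp.add_apply, Finsupp.sub_apply,
      Finsupp.single_apply]
    simp +decide only [if_true, if_false]
    ring
  rw [h x y hxy] at hyx
  exact h2 hyx.symm

theorem not_isReversibleRing_zmod_odd_prime {p : ℕ} [Fact p.Prime] (hp : Odd p) :
    ¬ IsReversibleRing (ZMod p)[Q₈] := by
  have h2 : (2 : ZMod p) ≠ 0 := by
    refine Ring.two_ne_zero ?_
    rw [ZMod.ringChar_zmod_n]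
    rintro rfl
    exact absurd hp (by decide)
  obtain ⟨u, v, huv⟩ := ZMod.sq_add_sq p (-1)
  by_cases hv : v = 0
  · have hu : u ≠ 0 := by rintro rfl; simp [hv] at huv
    exact not_isReversibleRing_of_sq_add_sq_eq_neg_one ((add_comm _ _).trans huv)
      (mul_ne_zero h2 hu)
  · exact not_isReversibleRing_of_sq_add_sq_eq_neg_one huv (mul_ne_zero h2 hv)

end ZeroDivisors

section GroupRing

variable {R G : Type*} [CommSemiring R]

instance charP_monoidAlgebra [Monoid G] (p : ℕ) [CharP R p] : CharP R[G] p :=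
  charP_of_injective_algebraMap (FaithfulSMul.algebraMap_injective R R[G]) p

theorem coeff_antipode [Group G] (x : R[G]) (g : G) : (antipode R x).coeff g = x.coeff g⁻¹ := by
  classical
  induction x using MonoidAlgebra.induction_linear with
  | zero => simp
  | add x y hx hy => simp only [map_add, coeff_add, Finsupp.add_apply, hx, hy]
  | single h r => simp [Finsupp.single_apply, inv_eq_iff_eq_inv]

theorem counit_eq_sum_coeff [Fintype G] [Monoid G] (x : R[G]) :
    counit (R := R) x = ∑ g, x.coeff g := by
  classical
  induction x using MonoidAlgebra.induction_linear with
  | zero => simp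
  | add x y hx hy => simp only [map_add, coeff_add, Finsupp.add_apply, hx, hy,
      Finset.sum_add_distrib]
  | single h r => simp [Finsupp.single_apply]

end GroupRing

section CentralInvolution

theorem a_inv {n : ℕ} (i : ZMod (2 * n)) : (a i : QuaternionGroup n)⁻¹ = a (-i) := rfl

theorem xa_inv {n : ℕ} (i : ZMod (2 * n)) : (xa i : QuaternionGroup n)⁻¹ =
    xa ((n : ZMod (2 * n)) + i) := rfl

variable {R : Type*} [CommSemiring R]

/-- The central element `z = i²` of order two, as an element of the group ring. -/
noncomputable def centralInvolution : R[Q₈] := single (a 2) 1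

/-- The sum `w = 1 + z` of the elements of the centre. The product `w * x` encodes the image of `x`
in the group ring of `Q₈` modulo its centre: its coefficients are constant on cosets. -/
noncomputable def centerSum : R[Q₈] := 1 + centralInvolution

theorem centralInvolution_commute (x : R[Q₈]) : Commute centralInvolution x :=
  have h : ∀ g : Q₈, a 2 * g = g * a 2 := by decide
  single_commute h (Commute.all 1) x

theorem centerSum_commute (x : R[Q₈]) : Commute centerSum x :=
  (Commute.one_left x).add_left (centralInvolution_commute x)

theorem centralInvolution_mul_self : (centralInvolution * centralInvolution : R[Q₈]) = 1 := by
  rw [centralInvolution, single_mul_single, one_mul]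
  rfl

theorem centralInvolution_mul_centerSum : (centralInvolution * centerSum : R[Q₈]) = centerSum := by
  rw [centerSum, mul_add, centralInvolution_mul_self, mul_one, add_comm]

theorem coeff_centralInvolution_mul_a (x : R[Q₈]) (i : ZMod (2 * 2)) :
    (centralInvolution * x).coeff (a i) = x.coeff (a (i + 2)) := by
  simp [centralInvolution, a_inv, add_comm, show (-2 : ZMod (2 * 2)) = 2 from rfl]

theorem coeff_centralInvolution_mul_xa (x : R[Q₈]) (i : ZMod (2 * 2)) :
    (centralInvolution * x).coeff (xa i) = x.coeff (xa (i + 2)) := by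
  simp [centralInvolution, a_inv]

theorem coeff_centerSum_mul_a (x : R[Q₈]) (i : ZMod (2 * 2)) :
    (centerSum * x).coeff (a i) = x.coeff (a i) + x.coeff (a (i + 2)) := by
  rw [centerSum, add_mul, one_mul, coeff_add, Finsupp.add_apply, coeff_centralInvolution_mul_a]

theorem coeff_centerSum_mul_xa (x : R[Q₈]) (i : ZMod (2 * 2)) :
    (centerSum * x).coeff (xa i) = x.coeff (xa i) + x.coeff (xa (i + 2)) := by
  rw [centerSum, add_mul, one_mul, coeff_add, Finsupp.add_apply, coeff_centralInvolution_mul_xa]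

/-- The linear form `τ` summing the coefficients of an element over the centre of `Q₈`. -/
noncomputable def centerCoeff (x : R[Q₈]) : R := (centerSum * x).coeff (a 0)

/-- The element `n(x)` for which `S(x) x = ε(x)² + w n(x)` in characteristic two, where `S` is the
antipode and `ε` the counit. -/
noncomputable def normRemainder (x : R[Q₈]) : R[Q₈] :=
  let c := (centerSum * x).coeff
  single (a 1) (c (a 0) * c (a 1) + c (xa 0) * c (xa 1)) +
    single (xa 0) (c (a 0) * c (xa 0) + c (a 1) * c (xa 1)) +
    single (xa 1) (c (a 0) * c (xa 1) + c (a 1) * c (xa 0))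

theorem counit_eq_sum_coeff_centerSum_mul (x : R[Q₈]) :
    counit (R := R) x = (centerSum * x).coeff (a 0) + (centerSum * x).coeff (a 1) +
      (centerSum * x).coeff (xa 0) + (centerSum * x).coeff (xa 1) := by
  simp only [counit_eq_sum_coeff, sum_quaternionGroup_two, coeff_centerSum_mul_a,
    coeff_centerSum_mul_xa]
  reduce_mod_char
  ring

end CentralInvolution

section CharTwo

variable {R : Type*} [CommRing R] [CharP R 2]

theorem centerSum_mul_self : (centerSum * centerSum : R[Q₈]) = 0 := by
  rw [centerSum, add_mul, one_mul, ← centerSum, centralInvolution_mul_centerSum,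
    CharTwo.add_self_eq_zero]

theorem antipode_eq (x : R[Q₈]) :
    antipode R x = centralInvolution * x + centerCoeff x • centerSum := by
  rw [← mul_one centerSum, ← coeff_inj, Finsupp.ext_iff, forall_quaternionGroup_two]
  simp only [coeff_antipode, coeff_add, Finsupp.add_apply, coeff_smul, Finsupp.smul_apply,
    smul_eq_mul, centerCoeff, coeff_centralInvolution_mul_a, coeff_centralInvolution_mul_xa,
    coeff_centerSum_mul_a, coeff_centerSum_mul_xa, MonoidAlgebra.one_def, QuaternionGroup.one_def,
    coeff_single, Finsupp.single_apply, a_inv, xa_inv]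
  simp +decide only [if_true, if_false]
  reduce_mod_char
  grind

theorem antipode_mul_self (x : R[Q₈]) :
    antipode R x * x = counit (R := R) x ^ 2 • 1 + centerSum * normRemainder x := by
  rw [antipode_eq, add_mul, mul_assoc, smul_mul_assoc, ← coeff_inj, Finsupp.ext_iff,
    forall_quaternionGroup_two]
  simp only [coeff_add, Finsupp.add_apply, coeff_smul, Finsupp.smul_apply, smul_eq_mul,
    centerCoeff, normRemainder, counit_eq_sum_coeff_centerSum_mul, coeff_centralInvolution_mul_a,
    coeff_centralInvolution_mul_xa, coeff_centerSum_mul_a, coeff_centerSum_mul_xa,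
    MonoidAlgebra.one_def, QuaternionGroup.one_def, coeff_single, Finsupp.single_apply]
  simp only [coeff_mul_a, coeff_mul_xa]
  reduce_mod_char
  simp +decide only [if_true, if_false]
  refine ⟨⟨?_, ?_, ?_, ?_⟩, ?_, ?_, ?_, ?_⟩ <;> grind

theorem centerSum_mul_antipode (x : R[Q₈]) : centerSum * antipode R x = centerSum * x := by
  rw [antipode_eq, mul_add, ← (centralInvolution_commute centerSum).left_comm, ← mul_assoc,
    centralInvolution_mul_centerSum, mul_smul_comm, centerSum_mul_self, smul_zero, add_zero]

theorem centerSum_mul_mul_comm (x y : R[Q₈]) : centerSum * (x * y) = centerSum * (y * x) := by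
  rw [← centerSum_mul_antipode, antipode_mul_antidistrib, ← mul_assoc, centerSum_mul_antipode,
    mul_assoc, (centerSum_commute _).left_comm, centerSum_mul_antipode,
    ← (centerSum_commute _).left_comm]

theorem mul_swap_eq_of_mul_eq_zero {x y : R[Q₈]} (h : x * y = 0) :
    y * x = centerCoeff x • (centerSum * y) + centerCoeff y • (centerSum * x) := by
  have hzz : centralInvolution * y * (centralInvolution * x) = y * x := by
    rw [(centralInvolution_commute y).eq, mul_assoc, ← mul_assoc centralInvolution,
      centralInvolution_mul_self, one_mul]
  have hzw : centralInvolution * y * centerSum = centerSum * y := by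
    rw [mul_assoc, ← (centerSum_commute y).eq, ← mul_assoc, centralInvolution_mul_centerSum]
  have hwz : centerSum * (centralInvolution * x) = centerSum * x := by
    rw [← mul_assoc, (centerSum_commute _).eq, centralInvolution_mul_centerSum]
  have hS : antipode R y * antipode R x = 0 := by rw [← antipode_mul_antidistrib, h, map_zero]
  rw [antipode_eq, antipode_eq, add_mul, mul_add, mul_add, hzz, smul_mul_assoc, mul_smul_comm, hzw,
    smul_mul_assoc, mul_smul_comm, hwz, centerSum_mul_self, smul_zero, smul_zero, add_zero,
    add_assoc] at hS
  exact CharTwo.add_eq_zero.1 hS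

theorem counit_sq_smul_add_eq_zero_of_mul_eq_zero {x y : R[Q₈]} (h : x * y = 0) :
    counit (R := R) x ^ 2 • y + centerSum * (normRemainder x * y) = 0 := by
  have hN := congrArg (· * y) (antipode_mul_self x)
  simpa only [mul_assoc, h, mul_zero, add_mul, smul_mul_assoc, one_mul, eq_comm] using hN

theorem counit_sq_smul_add_eq_zero_of_mul_eq_zero_right {x y : R[Q₈]} (h : x * y = 0) :
    counit (R := R) y ^ 2 • x + centerSum * (normRemainder y * x) = 0 := by
  have hyS : y * antipode R y = antipode R y * y := by
    rw [antipode_eq, mul_add, add_mul, ← (centralInvolution_commute y).left_comm, mul_assoc,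
      mul_smul_comm, smul_mul_assoc, (centerSum_commute y).eq]
  have hN := congrArg (x * ·) (antipode_mul_self y)
  rw [centerSum_mul_mul_comm, (centerSum_commute x).left_comm]
  simpa only [← hyS, ← mul_assoc, h, zero_mul, mul_add, mul_smul_comm, mul_one, eq_comm] using hN

-- When `ε(x) = 0`, `ε(n(x)) = s² + st + t²` for differences `s`, `t` of coefficients of `w * x`.
theorem coeff_centerSum_mul_eq_centerCoeff
    (hR : ∀ s t : R, s ^ 2 + s * t + t ^ 2 = 0 → s = 0)
    {x : R[Q₈]} (hx : counit (R := R) x = 0) (hn : counit (R := R) (normRemainder x) = 0) (g : Q₈) :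
    (centerSum * x).coeff g = centerCoeff x := by
  rw [counit_eq_sum_coeff_centerSum_mul] at hx
  simp only [normRemainder, map_add, counit_single, CommSemiring.counit_apply] at hn
  have ha (i : ZMod (2 * 2)) : (centerSum * x).coeff (a (i + 2)) = (centerSum * x).coeff (a i) := by
    rw [← coeff_centralInvolution_mul_a, ← mul_assoc, centralInvolution_mul_centerSum]
  have hxa (i : ZMod (2 * 2)) :
      (centerSum * x).coeff (xa (i + 2)) = (centerSum * x).coeff (xa i) := by
    rw [← coeff_centralInvolution_mul_xa, ← mul_assoc, centralInvolution_mul_centerSum]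
  set α := (centerSum * x).coeff (a 0)
  set β := (centerSum * x).coeff (a 1)
  set γ := (centerSum * x).coeff (xa 0)
  set δ := (centerSum * x).coeff (xa 1)
  have hβγ : β + γ = 0 := hR _ (γ + δ) (by grind)
  have hγδ : γ + δ = 0 := hR _ (β + γ) (by grind)
  have hβα : β = α := by grind
  have hγα : γ = α := by grind
  have hδα : δ = α := by grind
  revert g
  exact forall_quaternionGroup_two.2
    ⟨⟨rfl, hβα, ha 0, (ha 1).trans hβα⟩, hγα, hδα, (hxa 0).trans hγα, (hxa 1).trans hδα⟩

variable [IsDomain R]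

theorem eq_zero_of_mul_eq_zero_of_centerSum_mul_eq_zero {x y : R[Q₈]}
    (hx : counit (R := R) x ≠ 0) (hy : centerSum * y = 0) (hxy : x * y = 0) : y = 0 := by
  have h := counit_sq_smul_add_eq_zero_of_mul_eq_zero hxy
  rw [(centerSum_commute _).left_comm, hy, mul_zero, add_zero] at h
  exact (smul_eq_zero.1 h).resolve_left (pow_ne_zero 2 hx)

theorem centerSum_mul_eq_zero_or_coeff_eq
    (hR : ∀ s t : R, s ^ 2 + s * t + t ^ 2 = 0 → s = 0) {x y : R[Q₈]}
    (h : counit (R := R) x ^ 2 • y + centerSum * (normRemainder x * y) = 0) :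
    centerSum * y = 0 ∨ ∀ g, (centerSum * x).coeff g = centerCoeff x := by
  by_cases hx : counit (R := R) x = 0
  · by_cases hn : counit (R := R) (normRemainder x) = 0
    · exact .inr (coeff_centerSum_mul_eq_centerCoeff hR hx hn)
    · refine .inl (eq_zero_of_mul_eq_zero_of_centerSum_mul_eq_zero hn ?_ ?_)
      · rw [← mul_assoc, centerSum_mul_self, zero_mul]
      · rw [← (centerSum_commute _).left_comm]
        simpa only [hx, zero_pow two_ne_zero, zero_smul, zero_add] using h
  · have hw := congrArg (centerSum * ·) h
    simp only [mul_add, mul_smul_comm, ← mul_assoc, centerSum_mul_self, zero_mul, add_zero,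
      mul_zero] at hw
    exact .inl ((smul_eq_zero.1 hw).resolve_left (pow_ne_zero 2 hx))

theorem isReversibleRing_of_charTwo
    (hR : ∀ s t : R, s ^ 2 + s * t + t ^ 2 = 0 → s = 0) :
    IsReversibleRing R[Q₈] := by
  intro x y h
  have centerCoeff_eq_zero {t : R[Q₈]} (ht : centerSum * t = 0) : centerCoeff t = 0 := by
    rw [centerCoeff, ht, coeff_zero, Finsupp.zero_apply]
  rw [mul_swap_eq_of_mul_eq_zero h]
  obtain hy | hx := centerSum_mul_eq_zero_or_coeff_eq hR
    (counit_sq_smul_add_eq_zero_of_mul_eq_zero h)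
  · rw [hy, centerCoeff_eq_zero hy, smul_zero, zero_smul, add_zero]
  obtain hx' | hy := centerSum_mul_eq_zero_or_coeff_eq hR
    (counit_sq_smul_add_eq_zero_of_mul_eq_zero_right h)
  · rw [hx', centerCoeff_eq_zero hx', smul_zero, zero_smul, add_zero]
  ext g
  simp only [coeff_add, coeff_smul, Finsupp.add_apply, Finsupp.smul_apply, hx, hy, smul_eq_mul,
    mul_comm, CharTwo.add_self_eq_zero, coeff_zero, Finsupp.zero_apply]

end CharTwo

end QuaternionGroupRing

/-- `QuaternionGroup 2` is the quaternion group `Q₈` of order 8. -/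
theorem stmt_13 (n : ℕ) (hn : 2 ≤ n) :
    (∀ a b : MonoidAlgebra (ZMod n) (QuaternionGroup 2), a * b = 0 → b * a = 0) ↔
      n = 2 := by
  refine ⟨fun h => ?_, ?_⟩
  · by_contra hne
    have : NeZero n := ⟨by lia⟩
    obtain h4 | ⟨p, hp, hpn, hodd⟩ :=
      Nat.four_dvd_or_exists_odd_prime_and_dvd_of_two_lt (by lia : 2 < n)
    · exact QuaternionGroupRing.not_isReversibleRing_of_four_eq_zero (R := ZMod 4) (by decide)
        (by decide) (.monoidAlgebra_zmod_of_dvd h4 h)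
    · have : Fact p.Prime := ⟨hp⟩
      exact QuaternionGroupRing.not_isReversibleRing_zmod_odd_prime hodd
        (.monoidAlgebra_zmod_of_dvd hpn h)
  · rintro rfl
    exact QuaternionGroupRing.isReversibleRing_of_charTwo (R := ZMod 2) (by decide)
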